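/- arXiv:2012.08878 — 8 statements merged into one kernel-verified Lean document; each statement's English description precedes it below -/
import Mathlib

section
/- Let P be a set of strings over Σ. If d : List (Σ ⊕ Σ) is a linear superstring of f(P), then the Σ-restriction of d is a linear superstring of P. -/
/-- `lift w` embeds a string over `α` into the barred alphabet `α ⊕ α` using unbarred letters. -/
def lift {α : Type*} (w : List α) : List (α ⊕ α) := w.map Sum.inl

/-- `bar w` embeds a string over `α` into the barred alphabet `α ⊕ α` using barred letters. -/
def bar {α : Type*} (w : List α) : List (α ⊕ α) := w.map Sum.inr

/-- `f(P) = {lift s | s ∈ P} ∪ {bar s | s ∈ P}`. -/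
def barred {α : Type*} (P : Set (List α)) : Set (List (α ⊕ α)) := (lift '' P) ∪ (bar '' P)

/-- A linear superstring of `P` contains every string of `P` as an infix. -/
def IsLinearSuperstring {β : Type*} (P : Set (List β)) (w : List β) : Prop := ∀ s ∈ P, s <:+: w

/-- `s` is a circular substring of the circular string `c` if `s` is an infix of `c^n`
for some `n ≥ 1`. -/
def IsCircularSubstring {β : Type*} (c s : List β) : Prop :=
  ∃ n, 1 ≤ n ∧ s <:+: (List.replicate n c).flatten

/-- A circular superstring of `P` has every string of `P` as a circular substring. -/
def IsCircularSuperstring {β : Type*} (P : Set (List β)) (c : List β) : Prop :=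
  ∀ s ∈ P, IsCircularSubstring c s

/-- The `Σ`-restriction of a string over the barred alphabet: keep the unbarred letters. -/
def restrict {α : Type*} (d : List (α ⊕ α)) : List α :=
  d.filterMap (Sum.elim some (fun _ => none))

section

variable {α β : Type*}

namespace IsLinearSuperstring

theorem mono {P Q : Set (List α)} {w : List α} (hPQ : P ⊆ Q) (hw : IsLinearSuperstring Q w) :
    IsLinearSuperstring P w :=
  fun s hs => hw s (hPQ hs)

theorem filterMap {P : Set (List α)} {w : List α} (hw : IsLinearSuperstring P w)
    (f : α → Option β) : IsLinearSuperstring (List.filterMap f '' P) (w.filterMap f) :=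
  Set.forall_mem_image.2 fun s hs => (hw s hs).filterMap f

end IsLinearSuperstring

theorem leftInverse_restrict_lift : Function.LeftInverse (restrict (α := α)) lift := fun w => by
  rw [restrict, lift, List.filterMap_map, Sum.elim_comp_inl, List.filterMap_some]

theorem restrict_isLinearSuperstring_general {P : Set (List α)} {d : List (α ⊕ α)}
    (hd : IsLinearSuperstring (lift '' P) d) : IsLinearSuperstring P (restrict d) := by
  have h : IsLinearSuperstring (restrict '' (lift '' P)) (restrict d) := hd.filterMap _
  rwa [leftInverse_restrict_lift.image_image] at h

end

/-- If `d` is a linear superstring of `f(P)`, then the `Σ`-restriction of `d` is a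
linear superstring of `P`. -/
theorem restrict_isLinearSuperstring {α : Type*} (P : Set (List α)) (d : List (α ⊕ α))
    (hd : IsLinearSuperstring (barred P) d) :
    IsLinearSuperstring P (restrict d) :=
  restrict_isLinearSuperstring_general (hd.mono Set.subset_union_left)
end

section
/- Let d : List (Σ ⊕ Σ) be a nonempty list whose first element lies in the range of Sum.inl and whose last element lies in the range of Sum.inr. If s : List (Σ ⊕ Σ) is a list all of whose letters lie in the range of Sum.inl, or all of whose letters lie in the range of Sum.inr, and s is an infix of the n-fold concatenation d^n for some n ≥ 1, then s is an infix of d itself. -/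
/-! An occurrence of `s` in a concatenation of words either lies inside one of the words or crosses
a seam, and then `s` contains two adjacent letters `x`, `y`, where `x` is the last letter of a word
and `y` the first letter of a later one. In `d ^ n` every seam reads `inr b`, `inl a`, a pair that
a word with letters from only one of the summands does not contain. -/

section Infix

variable {β : Type*} {d l m s : List β}

theorem infix_or_infix_of_infix_append
    (hseam : ∀ x ∈ l.getLast?, ∀ y ∈ m.head?, ¬ [x, y] <:+: s) (h : s <:+: l ++ m) :
    s <:+: l ∨ s <:+: m := by
  rcases List.infix_append_iff.mp h with hl | hm | ⟨t, u, rfl, ht, hu⟩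
  · exact .inl hl
  · exact .inr hm
  rcases t.eq_nil_or_concat with rfl | ⟨t, x, rfl⟩
  · exact .inr hu.isInfix
  rcases u with _ | ⟨y, u⟩
  · exact .inl (by simpa only [List.append_nil] using ht.isInfix)
  have hx : x ∈ l.getLast? := by
    obtain ⟨v, rfl⟩ := ht
    simp
  have hy : y ∈ m.head? := by
    obtain ⟨v, rfl⟩ := hu
    simp
  exact absurd ⟨t, u, by simp⟩ (hseam x hx y hy)

theorem eq_nil_or_exists_infix_of_infix_flatten {L : List (List β)}
    (hseam : L.Pairwise fun l m ↦ ∀ x ∈ l.getLast?, ∀ y ∈ m.head?, ¬ [x, y] <:+: s)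
    (h : s <:+: L.flatten) : s = [] ∨ ∃ l ∈ L, s <:+: l := by
  induction L with
  | nil => exact .inl (List.infix_nil.mp h)
  | cons l L ih =>
    obtain ⟨hl, hL⟩ := List.pairwise_cons.mp hseam
    have hseam_flatten : ∀ x ∈ l.getLast?, ∀ y ∈ L.flatten.head?, ¬ [x, y] <:+: s := by
      intro x hx y hy
      rw [List.head?_flatten] at hy
      obtain ⟨m, hm, hym⟩ := List.exists_of_findSome?_eq_some hy
      exact hl m hm x hx y hym
    rcases infix_or_infix_of_infix_append hseam_flatten h with hsl | hsL
    · exact .inr ⟨l, List.mem_cons_self, hsl⟩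
    · exact (ih hL hsL).imp_right fun ⟨m, hm, hsm⟩ ↦ ⟨m, List.mem_cons_of_mem l hm, hsm⟩

theorem infix_of_infix_pow_general {n : ℕ}
    (hseam : ∀ x ∈ d.getLast?, ∀ y ∈ d.head?, ¬ [x, y] <:+: s)
    (h : s <:+: (List.replicate n d).flatten) : s <:+: d := by
  rcases eq_nil_or_exists_infix_of_infix_flatten
    (List.pairwise_replicate.mpr (.inr hseam)) h with rfl | ⟨l, hl, hsl⟩
  · exact List.nil_infix
  · rwa [List.eq_of_mem_replicate hl] at hsl

end Infix

theorem not_inr_inl_infix {α β : Type*} {s : List (α ⊕ β)}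
    (hs : (∀ x ∈ s, ∃ a, x = Sum.inl a) ∨ (∀ x ∈ s, ∃ b, x = Sum.inr b)) (b : β) (a : α) :
    ¬ [Sum.inr b, Sum.inl a] <:+: s := by
  intro h
  rcases hs with hs | hs
  · simpa using hs (Sum.inr b) (h.subset (by simp))
  · simpa using hs (Sum.inl a) (h.subset (by simp))

/-- If `d` is nonempty, starts with an unbarred letter and ends with a barred letter,
and `s` is an infix of `d^n` (`n ≥ 1`) whose letters are all unbarred or all barred,
then `s` is an infix of `d`. -/
theorem infix_of_infix_pow {α : Type*} (d : List (α ⊕ α))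
    (hd : d ≠ [])
    (hhead : ∃ a : α, d.head? = some (Sum.inl a))
    (hlast : ∃ a : α, d.getLast? = some (Sum.inr a))
    (s : List (α ⊕ α))
    (hs : (∀ x ∈ s, ∃ a : α, x = Sum.inl a) ∨ (∀ x ∈ s, ∃ a : α, x = Sum.inr a))
    (n : ℕ) (hn : 1 ≤ n)
    (hinf : s <:+: (List.replicate n d).flatten) :
    s <:+: d := by
  obtain ⟨a, ha⟩ := hhead
  obtain ⟨b, hb⟩ := hlast
  exact infix_of_infix_pow_general (by simpa [ha, hb] using not_inr_inl_infix hs b a) hinf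
end

section
/- If a list c : List (Σ ⊕ Σ) contains at least one letter in the range of Sum.inl and at least one letter in the range of Sum.inr, then there exists k such that the rotation c.rotate k is nonempty, its first element lies in the range of Sum.inl, and its last element lies in the range of Sum.inr. -/
/-!
Rotate the word so that it starts with a barred (`Sum.inr`) letter, then rotate its maximal barred
prefix to the end. This prefix is nonempty, so the new last letter is barred; the letter that
stopped the prefix is unbarred and is now the first one.
-/

section

variable {α : Type*}

theorem rotate_length_takeWhile (p : α → Bool) (l : List α) :
    l.rotate (l.takeWhile p).length = l.dropWhile p ++ l.takeWhile p := by
  simpa only [List.takeWhile_append_dropWhile] using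
    List.rotate_append_length_eq (l.takeWhile p) (l.dropWhile p)

variable {l : List α} {p : α → Bool}

theorem exists_rotate_eq_cons_of_mem {a : α} (ha : a ∈ l) : ∃ k t, l.rotate k = a :: t := by
  obtain ⟨s, t, rfl⟩ := List.append_of_mem ha
  exact ⟨s.length, t ++ s, List.rotate_append_length_eq s (a :: t)⟩

theorem exists_head?_dropWhile_eq_some (h : ∃ b ∈ l, p b = false) :
    ∃ b, (l.dropWhile p).head? = some b ∧ p b = false := by
  have hne : l.dropWhile p ≠ [] := by simpa [List.dropWhile_eq_nil_iff] using h
  exact ⟨_, List.head?_eq_some_head hne, List.head_dropWhile_not p hne⟩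

theorem exists_getLast?_takeWhile_cons_eq_some {a : α} (ha : p a = true) :
    ∃ b, ((a :: l).takeWhile p).getLast? = some b ∧ p b = true := by
  have hne : (a :: l).takeWhile p ≠ [] := by simp [ha]
  exact ⟨_, List.getLast?_eq_some_getLast hne, List.mem_takeWhile_imp (List.getLast_mem hne)⟩

theorem exists_rotate_head?_eq_false_getLast?_eq_true (hfalse : ∃ a ∈ l, p a = false)
    (htrue : ∃ a ∈ l, p a = true) :
    ∃ k, (∃ a, (l.rotate k).head? = some a ∧ p a = false) ∧
      ∃ b, (l.rotate k).getLast? = some b ∧ p b = true := by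
  obtain ⟨b, hb, hpb⟩ := htrue
  obtain ⟨m, t, hm⟩ := exists_rotate_eq_cons_of_mem hb
  have hfalse' : ∃ a ∈ b :: t, p a = false := by simpa only [← hm, List.mem_rotate] using hfalse
  obtain ⟨x, hx, hpx⟩ := exists_head?_dropWhile_eq_some hfalse'
  obtain ⟨y, hy, hpy⟩ := exists_getLast?_takeWhile_cons_eq_some (l := t) hpb
  refine ⟨m + ((b :: t).takeWhile p).length, ?_⟩
  rw [← List.rotate_rotate, hm, rotate_length_takeWhile]
  exact ⟨⟨x, by rw [List.head?_append, hx, Option.some_or], hpx⟩,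
    ⟨y, by rw [List.getLast?_append, hy, Option.some_or], hpy⟩⟩

end

theorem exists_rotate_head_inl_getLast_inr_general {α β : Type*} (c : List (α ⊕ β))
    (hl : ∃ a : α, Sum.inl a ∈ c) (hr : ∃ b : β, Sum.inr b ∈ c) :
    ∃ k, c.rotate k ≠ [] ∧ (∃ a : α, (c.rotate k).head? = some (Sum.inl a)) ∧
      (∃ b : β, (c.rotate k).getLast? = some (Sum.inr b)) := by
  obtain ⟨a, ha⟩ := hl
  obtain ⟨b, hb⟩ := hr
  obtain ⟨k, ⟨x, hx, hxl⟩, ⟨y, hy, hyr⟩⟩ :=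
    exists_rotate_head?_eq_false_getLast?_eq_true (p := Sum.isRight) ⟨_, ha, rfl⟩ ⟨_, hb, rfl⟩
  obtain ⟨a', rfl⟩ := Sum.isLeft_iff.mp (Sum.isRight_eq_false.mp hxl)
  obtain ⟨b', rfl⟩ := Sum.isRight_iff.mp hyr
  exact ⟨k, List.ne_nil_of_mem (List.mem_of_head? hx), ⟨a', hx⟩, ⟨b', hy⟩⟩

/-- If a list over the barred alphabet contains both an unbarred and a barred letter, then
some rotation of it is nonempty, starts with an unbarred letter and ends with a barred one. -/
theorem exists_rotate_head_inl_getLast_inr {α : Type*} (c : List (α ⊕ α))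
    (hl : ∃ a : α, Sum.inl a ∈ c) (hr : ∃ a : α, Sum.inr a ∈ c) :
    ∃ k, c.rotate k ≠ [] ∧ (∃ a : α, (c.rotate k).head? = some (Sum.inl a)) ∧
      (∃ a : α, (c.rotate k).getLast? = some (Sum.inr a)) :=
  exists_rotate_head_inl_getLast_inr_general c hl hr
end

section
/- Let P be a set of strings over Σ and let c be a circular superstring of f(P). If d is a rotation of c (d = c.rotate k for some k) such that d is nonempty, its first element lies in the range of Sum.inl, and its last element lies in the range of Sum.inr, then d is a linear superstring of f(P). -/
/-! Every occurrence of `s` in a power of `d` either lies inside one copy of `d` or crosses a seam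
between two copies, in which case `s` contains the last letter of `d` followed by the first one.
When `d` ends with a barred letter and starts with an unbarred one, a string of `f(P)`, having
letters of only one kind, cannot cross a seam. -/

theorem flatten_replicate_append_comm {β : Type*} (x y : List β) (n : ℕ) :
    (List.replicate n (x ++ y)).flatten ++ x = x ++ (List.replicate n (y ++ x)).flatten := by
  induction n with
  | zero => simp
  | succ n ih => simp [List.replicate_succ, ih]

theorem IsCircularSubstring.append_swap {β : Type*} {x y s : List β}
    (h : IsCircularSubstring (x ++ y) s) : IsCircularSubstring (y ++ x) s := by
  obtain ⟨n, -, hs⟩ := h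
  refine ⟨n + 1, n.succ_pos, hs.trans ⟨y, x, ?_⟩⟩
  simp [flatten_replicate_append_comm, List.replicate_succ]

theorem IsCircularSubstring.rotate {β : Type*} {c s : List β}
    (h : IsCircularSubstring c s) (k : ℕ) : IsCircularSubstring (c.rotate k) s := by
  rw [List.rotate_eq_drop_append_take_mod]
  exact append_swap (by rwa [List.take_append_drop])

theorem infix_or_infix_of_infix_append_s3 {β : Type*} {s t u : List β} (h : s <:+: t ++ u)
    (hseam : ∀ x ∈ t.getLast?, ∀ y ∈ u.head?, ¬ [x, y] <:+: s) : s <:+: t ∨ s <:+: u := by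
  obtain ht | hu | ⟨p, q, hp, hq, rfl, ⟨t', rfl⟩, ⟨u', rfl⟩⟩ := List.infix_append_iff_ne_nil.mp h
  · exact .inl ht
  · exact .inr hu
  · obtain ⟨p, x, rfl⟩ := p.eq_nil_or_concat'.resolve_left hp
    obtain ⟨y, q, rfl⟩ := List.exists_cons_of_ne_nil hq
    exact absurd ⟨p, q, by simp⟩ (hseam x (by simp) y (by simp))

theorem IsCircularSubstring.isInfix {β : Type*} {d s : List β} (h : IsCircularSubstring d s)
    (hseam : ∀ x ∈ d.getLast?, ∀ y ∈ d.head?, ¬ [x, y] <:+: s) : s <:+: d := by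
  obtain ⟨n, hn, hs⟩ := h
  induction n, hn using Nat.le_induction with
  | base => simpa using hs
  | succ n hn ih =>
    rw [List.replicate_succ, List.flatten_cons] at hs
    refine (infix_or_infix_of_infix_append_s3 hs ?_).elim id ih
    rwa [List.head?_flatten_replicate (Nat.one_le_iff_ne_zero.mp hn)]

theorem not_inr_inl_infix_of_mem_barred {α : Type*} {P : Set (List α)} {s : List (α ⊕ α)}
    (hs : s ∈ barred P) (a b : α) : ¬ [Sum.inr a, Sum.inl b] <:+: s := by
  intro h
  rcases hs with ⟨w, -, rfl⟩ | ⟨w, -, rfl⟩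
  · simpa [lift] using h.subset List.mem_cons_self
  · simpa [bar] using h.subset (List.mem_cons_of_mem _ List.mem_cons_self)

theorem rotate_isLinearSuperstring_general {β : Type*} {Q : Set (List β)} {c : List β}
    (hc : IsCircularSuperstring Q c) (k : ℕ)
    (hseam : ∀ s ∈ Q, ∀ x ∈ (c.rotate k).getLast?, ∀ y ∈ (c.rotate k).head?, ¬ [x, y] <:+: s) :
    IsLinearSuperstring Q (c.rotate k) :=
  fun s hs ↦ ((hc s hs).rotate k).isInfix (hseam s hs)

/-- A rotation of a circular superstring of `f(P)` which is nonempty, starts with an unbarred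
letter and ends with a barred letter is a linear superstring of `f(P)`. -/
theorem rotate_isLinearSuperstring {α : Type*} (P : Set (List α)) (c : List (α ⊕ α))
    (hc : IsCircularSuperstring (barred P) c) (k : ℕ) (d : List (α ⊕ α))
    (hd : d = c.rotate k) (hne : d ≠ [])
    (hhead : ∃ a : α, d.head? = some (Sum.inl a))
    (hlast : ∃ a : α, d.getLast? = some (Sum.inr a)) :
    IsLinearSuperstring (barred P) d := by
  subst hd
  obtain ⟨a, ha⟩ := hhead
  obtain ⟨b, hb⟩ := hlast
  exact rotate_isLinearSuperstring_general hc k fun s hs ↦ by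
    simpa [ha, hb] using not_inr_inl_infix_of_mem_barred hs b a
end

section
/- Let P be a set of strings over Σ and let c be a circular superstring of f(P). Then there exists a linear superstring w of P with 2 * w.length ≤ c.length. -/
/-!
Cut the circular string `c` at a barred letter `x`. An unbarred string does not contain `x`, so its
occurrences in powers of `c` never cross a cut; hence the unbarred letters of `c`, read from the cut
on, form a linear superstring of `P`. Symmetrically, so do the barred letters, read from an unbarred
one. These two superstrings have total length `|c|`, so the shorter one is short enough.
-/

section Infix

variable {β : Type*} {s u v : List β} {x : β}

theorem infix_or_infix_of_infix_append_cons (hx : x ∉ s) (h : s <:+: u ++ x :: v) :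
    s <:+: u ∨ s <:+: v := by
  have eq_nil_of_prefix {t : List β} (hts : t ⊆ s) (ht : t <+: x :: v) : t = [] := by
    rcases List.prefix_cons_iff.1 ht with rfl | ⟨t', rfl, -⟩
    · rfl
    · exact absurd (hts List.mem_cons_self) hx
  rcases List.infix_append_iff.1 h with hu | hxv | ⟨s₁, s₂, rfl, hs₁, hs₂⟩
  · exact Or.inl hu
  · rcases List.infix_cons_iff.1 hxv with hpre | hv
    · exact Or.inl (eq_nil_of_prefix (List.Subset.refl s) hpre ▸ List.nil_infix)
    · exact Or.inr hv
  · obtain rfl := eq_nil_of_prefix (List.subset_append_right s₁ s₂) hs₂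
    exact Or.inl (by simpa only [List.append_nil] using hs₁.isInfix)

theorem infix_of_infix_flatten_replicate_cons (hx : x ∉ s) {n : ℕ}
    (h : s <:+: (List.replicate n (x :: u)).flatten) : s <:+: u := by
  -- With a leading `u`, cutting the case `n + 1` at its first `x` leaves `u` and the case `n`.
  suffices hu : ∀ n, s <:+: u ++ (List.replicate n (x :: u)).flatten → s <:+: u from
    hu n (List.infix_append_of_infix_right h)
  intro n hn
  induction n with
  | zero => simpa only [List.replicate_zero, List.flatten_nil, List.append_nil] using hn
  | succ n ih => exact (infix_or_infix_of_infix_append_cons hx hn).elim id ih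

theorem append_flatten_replicate_comm (u v : List β) (n : ℕ) :
    u ++ (List.replicate n (v ++ u)).flatten = (List.replicate n (u ++ v)).flatten ++ u := by
  induction n with
  | zero => simp
  | succ n ih => simp [List.replicate_succ, ih]

end Infix

namespace IsCircularSubstring

variable {β γ : Type*} {c c' s : List β}

theorem subset (h : IsCircularSubstring c s) : s ⊆ c := by
  obtain ⟨n, -, hs⟩ := h
  intro x hx
  obtain ⟨l, hl, hxl⟩ := List.mem_flatten.1 (hs.subset hx)
  exact List.eq_of_mem_replicate hl ▸ hxl

theorem map (f : β → γ) (h : IsCircularSubstring c s) :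
    IsCircularSubstring (c.map f) (s.map f) := by
  obtain ⟨n, hn, hs⟩ := h
  refine ⟨n, hn, ?_⟩
  simpa only [List.map_flatten, List.map_replicate] using hs.map f

theorem of_isRotated (h : IsCircularSubstring c s) (hc : c ~r c') : IsCircularSubstring c' s := by
  obtain ⟨n, -, hs⟩ := h
  obtain ⟨k, hk, rfl⟩ := List.isRotated_iff_mod.1 hc
  rw [List.rotate_eq_drop_append_take hk]
  set u := c.take k
  set v := c.drop k
  have power_succ : (List.replicate (n + 1) (v ++ u)).flatten =
      v ++ (List.replicate n c).flatten ++ u := by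
    rw [List.replicate_succ, List.flatten_cons, List.append_assoc, append_flatten_replicate_comm,
      List.take_append_drop, List.append_assoc]
  exact ⟨n + 1, n.succ_pos, power_succ ▸ hs.trans (List.infix_append _ _ _)⟩

theorem infix_of_notMem {x : β} (h : IsCircularSubstring (x :: c) s) (hx : x ∉ s) : s <:+: c :=
  let ⟨_, _, hs⟩ := h
  infix_of_infix_flatten_replicate_cons hx hs

end IsCircularSubstring

section Restrict

variable {α : Type*}

theorem restrict_lift (s : List α) : restrict (lift s) = s := by
  simp [restrict, lift, List.filterMap_map, Function.comp_def]

theorem map_swap_bar (s : List α) : (bar s).map Sum.swap = lift s := by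
  simp [bar, lift]

theorem length_restrict_add_length_restrict_map_swap (c : List (α ⊕ α)) :
    (restrict c).length + (restrict (c.map Sum.swap)).length = c.length := by
  induction c with
  | nil => rfl
  | cons x c ih => cases x <;> simp [restrict, List.filterMap_cons] at ih ⊢ <;> omega

theorem exists_linearSuperstring_length_eq_restrict {P : Set (List α)} {c : List (α ⊕ α)} {b : α}
    (hc : IsCircularSuperstring (lift '' P) c) (hb : Sum.inr b ∈ c) :
    ∃ w : List α, IsLinearSuperstring P w ∧ w.length = (restrict c).length := by
  obtain ⟨u, v, rfl⟩ := List.append_of_mem hb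
  have hrot : u ++ Sum.inr b :: v ~r Sum.inr b :: (v ++ u) := List.isRotated_append
  have hperm : (restrict (u ++ Sum.inr b :: v)).Perm (restrict (v ++ u)) :=
    hrot.perm.filterMap _
  refine ⟨restrict (v ++ u), fun s hs => ?_, hperm.length_eq.symm⟩
  have hlift : lift s <:+: v ++ u :=
    ((hc _ ⟨s, hs, rfl⟩).of_isRotated hrot).infix_of_notMem (by simp [lift])
  exact restrict_lift s ▸ hlift.filterMap _

end Restrict

/-- From any circular superstring `c` of `f(P)` one gets a linear superstring of `P`
of length at most `|c| / 2`. -/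
theorem exists_linearSuperstring_of_circularSuperstring {α : Type*} (P : Set (List α))
    (c : List (α ⊕ α)) (hc : IsCircularSuperstring (barred P) c) :
    ∃ w : List α, IsLinearSuperstring P w ∧ 2 * w.length ≤ c.length := by
  by_cases hP : P ⊆ {[]}
  · exact ⟨[], fun s hs => hP hs ▸ List.infix_rfl, Nat.zero_le _⟩
  have hlift : IsCircularSuperstring (lift '' P) c := fun s hs => hc s (Or.inl hs)
  have hbar : IsCircularSuperstring (lift '' P) (c.map Sum.swap) := by
    rintro _ ⟨s, hs, rfl⟩
    exact map_swap_bar s ▸ (hc _ (Or.inr ⟨s, hs, rfl⟩)).map Sum.swap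
  obtain ⟨s, hs, hne⟩ := Set.not_subset.1 hP
  obtain ⟨a, ha⟩ := List.exists_mem_of_ne_nil s hne
  have hal : Sum.inl a ∈ c := (hc _ (Or.inl ⟨s, hs, rfl⟩)).subset (List.mem_map_of_mem ha)
  have har : Sum.inr a ∈ c := (hc _ (Or.inr ⟨s, hs, rfl⟩)).subset (List.mem_map_of_mem ha)
  obtain ⟨w, hw, hwl⟩ := exists_linearSuperstring_length_eq_restrict hlift har
  obtain ⟨w', hw', hwl'⟩ := exists_linearSuperstring_length_eq_restrict hbar
    (List.mem_map_of_mem (f := Sum.swap) hal)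
  have hsum := length_restrict_add_length_restrict_map_swap c
  rcases le_total w.length w'.length with hle | hle
  · exact ⟨w, hw, by omega⟩
  · exact ⟨w', hw', by omega⟩
end

section
/- Let w : List Σ be nonempty and set u = lift w ++ bar w : List (Σ ⊕ Σ). Then every list t that is both a prefix of u and a suffix of u and satisfies t ≠ u is the empty list. (Equivalently, u has no nonempty proper self-overlap: ov(u,u) = 0.) -/
/-!
Let `x` and `y` be nonempty lists with no letter in common, and compare a border `t` of `x ++ y`
with the prefix `x` and the suffix `y`. If `t` lies inside `x` or inside `y`, then one of `t`, `x`,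
`y` consists of letters common to `x` and `y` and is therefore empty, which only `t` can be.
Otherwise `t` begins with `x` and ends with `y`; these two blocks cannot overlap inside `t`, so
`t` is all of `x ++ y`.
-/

section DisjointLists

variable {α : Type*} {x y t : List α}

theorem eq_nil_of_subset_of_subset_of_disjoint (hxy : x.Disjoint y) (hx : t ⊆ x) (hy : t ⊆ y) :
    t = [] :=
  List.eq_nil_iff_forall_not_mem.mpr fun _ ha => hxy (hx ha) (hy ha)

theorem length_append_le_of_prefix_of_suffix_of_disjoint (hxy : x.Disjoint y) (hx : x <+: t)
    (hy : y <:+ t) : (x ++ y).length ≤ t.length := by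
  obtain ⟨r, rfl⟩ := hx
  obtain ⟨s, hs⟩ := hy
  rcases List.append_eq_append_iff.mp hs with ⟨z, rfl, rfl⟩ | ⟨z, rfl, rfl⟩
  · have overlap_nil : z = [] := eq_nil_of_subset_of_subset_of_disjoint hxy
      (List.subset_append_right s z) (List.subset_append_left z r)
    simp [overlap_nil]
  · simp

theorem no_self_overlap_lift_append_bar_general (hxy : x.Disjoint y) (hx : x ≠ []) (hy : y ≠ [])
    (hpre : t <+: x ++ y) (hsuf : t <:+ x ++ y) (hne : t ≠ x ++ y) : t = [] := by
  rcases List.prefix_or_prefix_of_prefix hpre (List.prefix_append x y) with htx | hxt <;>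
    rcases List.suffix_or_suffix_of_suffix hsuf (List.suffix_append x y) with hty | hyt
  · exact eq_nil_of_subset_of_subset_of_disjoint hxy htx.subset hty.subset
  · exact absurd (eq_nil_of_subset_of_subset_of_disjoint hxy
      (List.Subset.trans hyt.subset htx.subset) (List.Subset.refl y)) hy
  · exact absurd (eq_nil_of_subset_of_subset_of_disjoint hxy
      (List.Subset.refl x) (List.Subset.trans hxt.subset hty.subset)) hx
  · exact absurd (hpre.eq_of_length_le
      (length_append_le_of_prefix_of_suffix_of_disjoint hxy hxt hyt)) hne

end DisjointLists

theorem disjoint_lift_bar {α : Type*} (v w : List α) : (lift v).Disjoint (bar w) := by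
  simp [lift, bar, List.Disjoint]

/-- For nonempty `w`, the string `lift w ++ bar w` has no nonempty proper self-overlap:
`ov(w w̄, w w̄) = 0`. -/
theorem no_self_overlap_lift_append_bar {α : Type*} (w : List α) (hw : w ≠ []) :
    ∀ t : List (α ⊕ α), t <+: lift w ++ bar w → t <:+ lift w ++ bar w →
      t ≠ lift w ++ bar w → t = [] := fun _ =>
  no_self_overlap_lift_append_bar_general (disjoint_lift_bar w w)
    (List.map_eq_nil_iff.not.mpr hw) (List.map_eq_nil_iff.not.mpr hw)
end

section
/- Let P be a set of strings over Σ and let w be a linear superstring of P. Then the list u = lift w ++ bar w is a circular superstring of f(P), and u.length = 2 * w.length. Consequently, if P has a linear superstring of length k, then f(P) has a circular superstring of length 2k. -/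
theorem IsCircularSubstring.of_isInfix {α : Type*} {c s : List α} (h : s <:+: c) :
    IsCircularSubstring c s :=
  ⟨1, le_rfl, by simpa using h⟩

namespace IsLinearSuperstring

variable {α β : Type*} {P Q : Set (List α)} {u v w : List α}

theorem map (hw : IsLinearSuperstring P w) (g : α → β) :
    IsLinearSuperstring (List.map g '' P) (w.map g) :=
  Set.forall_mem_image.2 fun s hs => (hw s hs).map g

theorem append (hu : IsLinearSuperstring P u) (hv : IsLinearSuperstring Q v) :
    IsLinearSuperstring (P ∪ Q) (u ++ v) := by
  rintro s (hs | hs)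
  · exact List.infix_append_of_infix_left (hu s hs)
  · exact List.infix_append_of_infix_right (hv s hs)

theorem lift_append_bar (hw : IsLinearSuperstring P w) :
    IsLinearSuperstring (barred P) (lift w ++ bar w) :=
  (hw.map Sum.inl).append (hw.map Sum.inr)

theorem isCircularSuperstring (hw : IsLinearSuperstring P w) : IsCircularSuperstring P w :=
  fun s hs => .of_isInfix (hw s hs)

end IsLinearSuperstring

theorem length_lift_append_bar {α : Type*} (w : List α) :
    (lift w ++ bar w).length = 2 * w.length := by
  simp [lift, bar, two_mul]

/-- If `w` is a linear superstring of `P`, then `lift w ++ bar w` is a circular superstring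
of `f(P)` of length `2 * |w|`. -/
theorem lift_append_bar_isCircularSuperstring {α : Type*} (P : Set (List α)) (w : List α)
    (hw : IsLinearSuperstring P w) :
    IsCircularSuperstring (barred P) (lift w ++ bar w) ∧
      (lift w ++ bar w).length = 2 * w.length :=
  ⟨hw.lift_append_bar.isCircularSuperstring, length_lift_append_bar w⟩
end

section
/- Let Q be a finite set of nonempty strings over an alphabet α such that no string of Q is an infix of another string of Q, and let u, v ∈ Q be distinct strings with ov(u,v) ≥ ov(x,y) for all distinct x, y ∈ Q. Let Q' = (Q \ {u,v}) ∪ {u ⊙ v}. Then for all distinct x, y ∈ Q', ov(x,y) ≤ ov(u,v); that is, the overlaps chosen by successive steps of the greedy algorithm are non-increasing. -/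
/-- `ov x y`: the maximum length of a list that is simultaneously a proper suffix of `x`
and a proper prefix of `y`. -/
def ov {α : Type*} [DecidableEq α] (x y : List α) : ℕ :=
  Nat.findGreatest
    (fun k => k < x.length ∧ k < y.length ∧ x.drop (x.length - k) = y.take k)
    (min x.length y.length)

/-- `merge x y = x ⊙ y`, the merge of `x` onto `y` along their longest overlap. -/
def merge {α : Type*} [DecidableEq α] (x y : List α) : List α := x ++ y.drop (ov x y)

/-- `GreedySup Q z`: `z` is a possible output of the greedy superstring algorithm on the
finite set `Q` of strings. -/
inductive GreedySup {α : Type*} [DecidableEq α] : Finset (List α) → List α → Prop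
  | single (w : List α) : GreedySup {w} w
  | step {Q : Finset (List α)} {z : List α} (u v : List α) (hu : u ∈ Q) (hv : v ∈ Q)
      (hne : u ≠ v) (hmax : ∀ x ∈ Q, ∀ y ∈ Q, x ≠ y → ov x y ≤ ov u v)
      (hrec : GreedySup ((Q \ {u, v}) ∪ {merge u v}) z) : GreedySup Q z

/-!
An overlap of `x` with a string `w` that starts with `u` cannot be as long as `u` unless `u` is an
infix of `x`; otherwise it is already an overlap of `x` with `u`. The mirror image holds for
overlaps of a string ending in `v` with `y`. Since `merge u v` starts with `u` and ends in `v`,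
merging creates no overlap longer than those already present.
-/

section Overlap

variable {α : Type*} {s u v w x y : List α}

/-- `IsOverlap s x y`: the string `s` is a proper suffix of `x` and a proper prefix of `y`, so that
`ov x y` is the largest length of such an `s`, and `0` if there is none (which happens only if `x`
or `y` is empty). Properness is expressed through lengths. -/
structure IsOverlap (s x y : List α) : Prop where
  suffix_left : s <:+ x
  prefix_right : s <+: y
  length_lt_left : s.length < x.length
  length_lt_right : s.length < y.length

theorem IsOverlap.of_prefix_right (hs : IsOverlap s x w) (huw : u <+: w) (hux : ¬ u <:+: x) :
    IsOverlap s x u := by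
  have hlt : s.length < u.length := by
    by_contra! hle
    have hus : u <+: s := List.prefix_of_prefix_length_le huw hs.prefix_right hle
    exact hux (hus.isInfix.trans hs.suffix_left.isInfix)
  exact ⟨hs.suffix_left, List.prefix_of_prefix_length_le hs.prefix_right huw hlt.le,
    hs.length_lt_left, hlt⟩

theorem IsOverlap.of_suffix_left (hs : IsOverlap s w y) (hvw : v <:+ w) (hvy : ¬ v <:+: y) :
    IsOverlap s v y := by
  have hlt : s.length < v.length := by
    by_contra! hle
    have hvs : v <:+ s := List.suffix_of_suffix_length_le hvw hs.suffix_left hle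
    exact hvy (hvs.isInfix.trans hs.prefix_right.isInfix)
  exact ⟨List.suffix_of_suffix_length_le hs.suffix_left hvw hlt.le, hs.prefix_right,
    hlt, hs.length_lt_right⟩

end Overlap

section Merge

variable {α : Type*} [DecidableEq α] {s u v w x y : List α}

theorem IsOverlap.length_le_ov (hs : IsOverlap s x y) : s.length ≤ ov x y := by
  refine Nat.le_findGreatest (le_min hs.length_lt_left.le hs.length_lt_right.le)
    ⟨hs.length_lt_left, hs.length_lt_right, ?_⟩
  rw [← List.suffix_iff_eq_drop.mp hs.suffix_left, ← List.prefix_iff_eq_take.mp hs.prefix_right]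

theorem drop_length_sub_ov (x y : List α) : x.drop (x.length - ov x y) = y.take (ov x y) := by
  by_cases h : ov x y = 0
  · simp [h]
  · exact (Nat.findGreatest_of_ne_zero rfl h).2.2

theorem exists_isOverlap_length_eq_ov (h : ov x y ≠ 0) :
    ∃ s, IsOverlap s x y ∧ s.length = ov x y := by
  obtain ⟨hx, hy, -⟩ := Nat.findGreatest_of_ne_zero (m := ov x y) rfl h
  have hlen : (y.take (ov x y)).length = ov x y := List.length_take_of_le hy.le
  refine ⟨y.take (ov x y), ⟨?_, List.take_prefix _ _, ?_, ?_⟩, hlen⟩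
  · exact drop_length_sub_ov x y ▸ List.drop_suffix _ _
  · rwa [hlen]
  · rwa [hlen]

theorem ov_le_of_forall_isOverlap {n : ℕ} (h : ∀ s, IsOverlap s x y → s.length ≤ n) :
    ov x y ≤ n := by
  by_cases h0 : ov x y = 0
  · exact h0 ▸ n.zero_le
  · obtain ⟨s, hs, hlen⟩ := exists_isOverlap_length_eq_ov h0
    exact hlen ▸ h s hs

theorem ov_le_ov_of_prefix_right (huw : u <+: w) (hux : ¬ u <:+: x) : ov x w ≤ ov x u :=
  ov_le_of_forall_isOverlap fun _ hs ↦ (hs.of_prefix_right huw hux).length_le_ov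

theorem ov_le_ov_of_suffix_left (hvw : v <:+ w) (hvy : ¬ v <:+: y) : ov w y ≤ ov v y :=
  ov_le_of_forall_isOverlap fun _ hs ↦ (hs.of_suffix_left hvw hvy).length_le_ov

theorem prefix_merge (u v : List α) : u <+: merge u v :=
  List.prefix_append _ _

theorem suffix_merge (u v : List α) : v <:+ merge u v := by
  refine ⟨u.take (u.length - ov u v), ?_⟩
  calc u.take (u.length - ov u v) ++ v
      = u.take (u.length - ov u v) ++ (v.take (ov u v) ++ v.drop (ov u v)) := by
        rw [List.take_append_drop]
    _ = merge u v := by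
        rw [← drop_length_sub_ov, ← List.append_assoc, List.take_append_drop, merge]

theorem greedy_overlaps_antitone_general {Q : Set (List α)} (hu : u ∈ Q) (hv : v ∈ Q)
    (hu_inf : ∀ t ∈ Q \ {u, v}, ¬ u <:+: t) (hv_inf : ∀ t ∈ Q \ {u, v}, ¬ v <:+: t)
    (hmax : Q.Pairwise fun x y ↦ ov x y ≤ ov u v) (huw : u <+: w) (hvw : v <:+ w) :
    (Q \ {u, v} ∪ {w}).Pairwise fun x y ↦ ov x y ≤ ov u v := by
  rw [Set.union_singleton, Set.pairwise_insert]
  refine ⟨hmax.mono Set.sdiff_subset, fun t ht _ ↦ ⟨?_, ?_⟩⟩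
  · have hvt : v ≠ t := fun h ↦ ht.2 (Or.inr h.symm)
    exact (ov_le_ov_of_suffix_left hvw (hv_inf t ht)).trans (hmax hv ht.1 hvt)
  · have htu : t ≠ u := fun h ↦ ht.2 (Or.inl h)
    exact (ov_le_ov_of_prefix_right huw (hu_inf t ht)).trans (hmax ht.1 hu htu)

end Merge

/-- The overlaps chosen by successive steps of the greedy algorithm are non-increasing:
after merging a pair `u, v` of maximal overlap, every overlap between distinct strings of the
resulting set is at most `ov u v`. -/
theorem greedy_overlaps_antitone {α : Type*} [DecidableEq α] (Q : Finset (List α))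
    (hne : ∀ s ∈ Q, s ≠ ([] : List α))
    (hinf : ∀ s ∈ Q, ∀ t ∈ Q, s ≠ t → ¬ s <:+: t)
    (u v : List α) (hu : u ∈ Q) (hv : v ∈ Q) (huv : u ≠ v)
    (hmax : ∀ x ∈ Q, ∀ y ∈ Q, x ≠ y → ov x y ≤ ov u v) :
    ∀ x ∈ (Q \ {u, v}) ∪ {merge u v}, ∀ y ∈ (Q \ {u, v}) ∪ {merge u v}, x ≠ y →
      ov x y ≤ ov u v := by
  simpa [Set.Pairwise] using greedy_overlaps_antitone_general (Q := (Q : Set (List α))) hu hv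
    (by grind) (by grind) hmax (prefix_merge u v) (suffix_merge u v)
end
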